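/- arXiv:2412.10398 — 2 statements merged into one kernel-verified Lean document; each statement's English description precedes it below -/
import Mathlib

section
/- Let A and B be positive invertible bounded operators on a complex Hilbert space with mI ≤ A ≤ MI and mI ≤ B ≤ MI for some scalars 0 < m < M, put h := M/m, and let 0 ≤ t ≤ 1/2. Then K(h, 2(1−t))^{−1} K(h, 1/(1−t))^{t−1} ‖A sp_t B‖ ≤ ‖A ♯_t B‖ ≤ ‖A sp_t B‖, where ‖·‖ is the operator norm. -/
noncomputable section

variable {H : Type*} [NormedAddCommGroup H] [InnerProductSpace ℂ H] [CompleteSpace H]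

/-- Real power of a bounded operator, via the continuous functional calculus. -/
def opPow (A : H →L[ℂ] H) (t : ℝ) : H →L[ℂ] H := cfc (fun x : ℝ => x ^ t) A

/-- The logarithm of a bounded operator, via the continuous functional calculus. -/
def opLog (A : H →L[ℂ] H) : H →L[ℂ] H := cfc Real.log A

/-- The exponential of a bounded operator, via the continuous functional calculus. -/
def opExp (A : H →L[ℂ] H) : H →L[ℂ] H := cfc Real.exp A

/-- The weighted geometric mean `A ♯ₜ B = A^(1/2) (A^(-1/2) B A^(-1/2))^t A^(1/2)`. -/
def geoMean (A B : H →L[ℂ] H) (t : ℝ) : H →L[ℂ] H :=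
  opPow A (1/2) * opPow (opPow A (-(1/2)) * B * opPow A (-(1/2))) t * opPow A (1/2)

/-- The weighted spectral geometric mean `A spₜ B = (A⁻¹ ♯ B)^t A (A⁻¹ ♯ B)^t`,
where `A ♯ B` is the (unweighted, `t = 1/2`) geometric mean. -/
def spMean (A B : H →L[ℂ] H) (t : ℝ) : H →L[ℂ] H :=
  opPow (geoMean (Ring.inverse A) B (1/2)) t * A * opPow (geoMean (Ring.inverse A) B (1/2)) t

/-- The generalized Kantorovich constant `K(m, M, p)`. -/
def Kan (m M p : ℝ) : ℝ :=
  ((m * M ^ p - M * m ^ p) / ((p - 1) * (M - m))) *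
    (((p - 1) / p) * ((M ^ p - m ^ p) / (m * M ^ p - M * m ^ p))) ^ p

/-- The generalized Kantorovich constant `K(h, p)` (one-parameter form). -/
def Kan' (h p : ℝ) : ℝ :=
  ((h ^ p - h) / ((p - 1) * (h - 1))) * (((p - 1) / p) * ((h ^ p - 1) / (h ^ p - h))) ^ p

/-!
Both inequalities rest on the Riccati equation: `x = A⁻¹ ♯ B` is the unique positive solution of
`x A x = B`, so that `A spₛ B = xˢ A xˢ`.

If `xᵗ A xᵗ ≤ μ`, then `A ≤ μ x⁻²ᵗ` and `B = x A x ≤ μ x²⁻²ᵗ`; the two bounds commute, and the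
weighted geometric mean of them is `μ`. Joint monotonicity of `♯ₜ` gives `A ♯ₜ B ≤ μ`.

For the reverse inequality both means are symmetric under exchanging `(A, B, t)` with
`(B, A, 1 - t)`, so let `1/2 < s < 1` and `A ♯ₛ B ≤ l`, that is, `Xˢ ≤ l A⁻¹` for
`X = A^(-1/2) B A^(-1/2)`. Raising an operator inequality to a power `p > 1` costs a factor
`K(h, p)`. The power `1/s` gives an upper bound for `B` by a multiple of `A^(1 - 1/s)`, hence one
for `x = A⁻¹ ♯ B` by a multiple of `A^(-1/(2s))`, and the power `2s` turns the latter into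
`x²ˢ ≤ κ A⁻¹`, which says `A spₛ B = xˢ A xˢ ≤ κ`.
-/

section KantorovichConstant

variable {h p : ℝ}

lemma kan'_pos (hh : 1 < h) (hp : 1 < p) : 0 < Kan' h p := by
  have hpow : h < h ^ p := Real.self_lt_rpow_of_one_lt hh hp
  have hsub_self : 0 < h ^ p - h := sub_pos.2 hpow
  have hsub_one : 0 < h ^ p - 1 := sub_pos.2 (hh.trans hpow)
  exact mul_pos (div_pos hsub_self (mul_pos (sub_pos.2 hp) (sub_pos.2 hh)))
    (Real.rpow_pos_of_pos (mul_pos (div_pos (sub_pos.2 hp) (zero_lt_one.trans hp))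
      (div_pos hsub_one hsub_self)) p)

lemma rpow_le_chord (hh : 1 < h) (hp : 1 ≤ p) {x : ℝ} (hx : x ∈ Set.Icc 1 h) :
    x ^ p ≤ (h ^ p - 1) / (h - 1) * x - (h ^ p - h) / (h - 1) := by
  have hpos : 0 < h - 1 := by linarith
  have hconv := (convexOn_rpow hp).2 (Set.mem_Ici.2 zero_le_one)
    (Set.mem_Ici.2 (zero_le_one.trans hh.le))
    (div_nonneg (sub_nonneg.2 hx.2) hpos.le) (div_nonneg (sub_nonneg.2 hx.1) hpos.le)
    (by field_simp; ring)
  simp only [smul_eq_mul, Real.one_rpow] at hconv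
  calc x ^ p = ((h - x) / (h - 1) * 1 + (x - 1) / (h - 1) * h) ^ p := by
        congr 1
        field_simp
        ring
    _ ≤ (h - x) / (h - 1) * 1 + (x - 1) / (h - 1) * h ^ p := hconv
    _ = _ := by
        field_simp
        ring

-- Bernoulli's inequality for `q x`, where `x = 1 / q` is the point at which the chord is tangent
-- to `K(h, p) xᵖ`.
lemma chord_le_kan'_mul_rpow (hh : 1 < h) (hp : 1 < p) {x : ℝ} (hx : 0 ≤ x) :
    (h ^ p - 1) / (h - 1) * x - (h ^ p - h) / (h - 1) ≤ Kan' h p * x ^ p := by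
  have hpow : h < h ^ p := Real.self_lt_rpow_of_one_lt hh hp
  have hsub_self : 0 < h ^ p - h := sub_pos.2 hpow
  have hsub_one : 0 < h ^ p - 1 := sub_pos.2 (hh.trans hpow)
  have hp₁ : 0 < p - 1 := sub_pos.2 hp
  have hh₁ : 0 < h - 1 := sub_pos.2 hh
  set q := (p - 1) / p * ((h ^ p - 1) / (h ^ p - h)) with hq
  have hq₀ : 0 < q := by positivity
  have bernoulli : 1 + p * (q * x - 1) ≤ (q * x) ^ p := by
    simpa using one_add_mul_self_le_rpow_one_add (s := q * x - 1)
      (by linarith [mul_nonneg hq₀.le hx]) hp.le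
  calc (h ^ p - 1) / (h - 1) * x - (h ^ p - h) / (h - 1)
      = (h ^ p - h) / ((p - 1) * (h - 1)) * (1 + p * (q * x - 1)) := by
        rw [hq]
        field_simp
        ring
    _ ≤ (h ^ p - h) / ((p - 1) * (h - 1)) * (q * x) ^ p := by gcongr
    _ = Kan' h p * x ^ p := by rw [Real.mul_rpow hq₀.le hx, ← mul_assoc, hq, Kan']

end KantorovichConstant

section CStarAlgebra

variable {R : Type*} [CStarAlgebra R] {a b x : R}

lemma smul_add_algebraMap_eq_cfc (ha : IsSelfAdjoint a) (γ δ : ℝ) :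
    γ • a + algebraMap ℝ R δ = cfc (fun r : ℝ => γ * r + δ) a := by
  rw [cfc_add_const δ _ a (by fun_prop) ha, cfc_const_mul_id γ a ha]

variable [PartialOrder R] [StarOrderedRing R]

lemma continuousOn_rpow_spectrum (ha : IsStrictlyPositive a) (w : ℝ) :
    ContinuousOn (fun r : ℝ => r ^ w) (spectrum ℝ a) :=
  continuousOn_id.rpow_const fun _ hr => Or.inl (ha.spectrum_pos hr).ne'

lemma smul_rpow_eq_cfc (ha : IsStrictlyPositive a) (c w : ℝ) :
    c • a ^ w = cfc (fun r : ℝ => c * r ^ w) a := by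
  rw [CFC.rpow_eq_cfc_real ha.nonneg, cfc_const_mul c _ a (continuousOn_rpow_spectrum ha w)]

lemma smul_rpow_rpow (ha : IsStrictlyPositive a) {c : ℝ} (hc : 0 < c) (w y : ℝ) :
    (c • a ^ w) ^ y = c ^ y • a ^ (w * y) := by
  rw [smul_rpow_eq_cfc ha, smul_rpow_eq_cfc ha, CFC.cfc_rpow
    (fun r hr => mul_pos hc (Real.rpow_pos_of_pos (ha.spectrum_pos hr) w))
    ((continuousOn_rpow_spectrum ha w).const_mul c) ha.isSelfAdjoint]
  refine cfc_congr fun r hr => ?_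
  have hr₀ : 0 ≤ r := (ha.spectrum_pos hr).le
  simp only [Real.mul_rpow hc.le (Real.rpow_nonneg hr₀ w), Real.rpow_mul hr₀]

lemma smul_rpow_mul_smul_rpow (hx : IsUnit x) (c d u v : ℝ) :
    (c • x ^ u) * (d • x ^ v) = (c * d) • x ^ (u + v) := by
  rw [smul_mul_smul_comm, CFC.rpow_add hx]

lemma spectrum_smul_rpow (ha : IsStrictlyPositive a) (c w : ℝ) :
    spectrum ℝ (c • a ^ w) = (fun r : ℝ => c * r ^ w) '' spectrum ℝ a := by
  rw [smul_rpow_eq_cfc ha]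
  exact cfc_map_spectrum _ a ha.isSelfAdjoint ((continuousOn_rpow_spectrum ha w).const_mul c)

lemma rpow_conj_rpow_conj (hx : IsUnit x) (s u : ℝ) (a : R) :
    x ^ s * (x ^ u * a * x ^ u) * x ^ s = x ^ (s + u) * a * x ^ (s + u) := by
  nth_rw 2 [add_comm s u]
  simp only [CFC.rpow_add hx, mul_assoc]

lemma rpow_conj_smul_rpow (hx : IsUnit x) (c s w : ℝ) :
    x ^ s * (c • x ^ w) * x ^ s = c • x ^ (w + 2 * s) := by
  rw [mul_smul_comm, smul_mul_assoc, ← CFC.rpow_add hx, ← CFC.rpow_add hx]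
  ring_nf

lemma rpow_neg_conj_rpow_conj (hx : IsStrictlyPositive x) (s : ℝ) (a : R) :
    x ^ (-s) * (x ^ s * a * x ^ s) * x ^ (-s) = a := by
  rw [rpow_conj_rpow_conj hx.isUnit, neg_add_cancel, CFC.rpow_zero x hx.nonneg, one_mul, mul_one]

lemma rpow_conj_eq_iff (hx : IsStrictlyPositive x) (s : ℝ) :
    x ^ s * a * x ^ s = b ↔ a = x ^ (-s) * b * x ^ (-s) := by
  constructor <;> rintro rfl
  · rw [rpow_neg_conj_rpow_conj hx]
  · simpa using rpow_neg_conj_rpow_conj hx (-s) b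

lemma rpow_conj_le_smul_rpow_iff (hx : IsStrictlyPositive x) (c s w : ℝ) :
    x ^ s * a * x ^ s ≤ c • x ^ w ↔ a ≤ c • x ^ (w - 2 * s) := by
  constructor <;> intro hle
  · have := conjugate_le_conjugate_of_nonneg hle (CFC.rpow_nonneg (a := x) (y := -s))
    rwa [rpow_neg_conj_rpow_conj hx, rpow_conj_smul_rpow hx.isUnit, mul_neg, ← sub_eq_add_neg]
      at this
  · have := conjugate_le_conjugate_of_nonneg hle (CFC.rpow_nonneg (a := x) (y := s))
    rwa [rpow_conj_smul_rpow hx.isUnit, sub_add_cancel] at this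

lemma isStrictlyPositive_rpow_conj (hx : IsStrictlyPositive x) (ha : IsStrictlyPositive a)
    (s : ℝ) : IsStrictlyPositive (x ^ s * a * x ^ s) :=
  ha.conjugate_of_isUnit_of_isSelfAdjoint _ _ (hx.isUnit.cfcRpow s hx.nonneg)
    (IsSelfAdjoint.of_nonneg CFC.rpow_nonneg)

lemma rpow_conj_rpow_neg_one (hx : IsStrictlyPositive x) (ha : IsStrictlyPositive a) (s : ℝ) :
    (x ^ s * a * x ^ s) ^ (-1 : ℝ) = x ^ (-s) * a ^ (-1 : ℝ) * x ^ (-s) := by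
  have hpos := isStrictlyPositive_rpow_conj hx ha s
  refine left_inv_eq_right_inv (a := x ^ s * a * x ^ s) ?_ ?_
  · simpa only [CFC.rpow_one _ hpos.nonneg] using CFC.rpow_neg_mul_rpow 1 hpos
  · have hinv : a * a ^ (-1 : ℝ) = 1 := by
      simpa only [CFC.rpow_one a ha.nonneg] using CFC.rpow_mul_rpow_neg 1 ha
    calc x ^ s * a * x ^ s * (x ^ (-s) * a ^ (-1 : ℝ) * x ^ (-s))
        = x ^ s * (a * (x ^ s * x ^ (-s)) * a ^ (-1 : ℝ)) * x ^ (-s) := by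
          simp only [mul_assoc]
      _ = 1 := by
          rw [CFC.rpow_mul_rpow_neg s hx, mul_one, hinv, mul_one, CFC.rpow_mul_rpow_neg s hx]

lemma le_smul_rpow_neg_one_comm (ha : IsStrictlyPositive a) (hb : IsStrictlyPositive b) {c : ℝ}
    (hc : 0 < c) (hab : a ≤ c • b ^ (-1 : ℝ)) : b ≤ c • a ^ (-1 : ℝ) := by
  have hinv := CStarAlgebra.rpow_neg_one_le_rpow_neg_one hab ha
  rwa [smul_rpow_rpow hb hc, Real.rpow_neg_one, neg_one_mul, neg_neg, CFC.rpow_one b hb.nonneg,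
    inv_smul_le_iff_of_pos hc] at hinv

section Kantorovich

variable {h p : ℝ}

lemma rpow_le_kan'_smul_rpow_of_spectrum_subset_Icc_one (hh : 1 < h) (hp : 1 < p)
    (ha : IsStrictlyPositive a) (hs : spectrum ℝ a ⊆ Set.Icc 1 h) (hab : a ≤ b) :
    a ^ p ≤ Kan' h p • b ^ p := by
  have hb : IsStrictlyPositive b := ha.of_le hab
  have hγ : 0 ≤ (h ^ p - 1) / (h - 1) :=
    div_nonneg (sub_nonneg.2 (hh.trans (Real.self_lt_rpow_of_one_lt hh hp)).le)
      (sub_nonneg.2 hh.le)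
  set γ := (h ^ p - 1) / (h - 1)
  set δ := -((h ^ p - h) / (h - 1))
  calc a ^ p = cfc (fun r : ℝ => r ^ p) a := CFC.rpow_eq_cfc_real ha.nonneg
    _ ≤ cfc (fun r : ℝ => γ * r + δ) a :=
        cfc_mono (fun r hr => rpow_le_chord hh hp.le (hs hr)) (continuousOn_rpow_spectrum ha p)
    _ = γ • a + algebraMap ℝ R δ := (smul_add_algebraMap_eq_cfc ha.isSelfAdjoint γ δ).symm
    _ ≤ γ • b + algebraMap ℝ R δ := by gcongr
    _ = cfc (fun r : ℝ => γ * r + δ) b := smul_add_algebraMap_eq_cfc hb.isSelfAdjoint γ δ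
    _ ≤ cfc (fun r : ℝ => Kan' h p * r ^ p) b :=
        cfc_mono (fun r hr => chord_le_kan'_mul_rpow hh hp (hb.spectrum_pos hr).le)
          (by fun_prop) ((continuousOn_rpow_spectrum hb p).const_mul _)
    _ = Kan' h p • b ^ p := (smul_rpow_eq_cfc hb _ p).symm

-- The spectral bound is on the larger element, so the previous estimate is used for the inverses.
theorem rpow_le_kan'_smul_rpow (hh : 1 < h) (hp : 1 < p) {n : ℝ} (hn : 0 < n)
    (ha : IsStrictlyPositive a) (hs : spectrum ℝ b ⊆ Set.Icc n (h * n)) (hab : a ≤ b) :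
    a ^ p ≤ Kan' h p • b ^ p := by
  have hb : IsStrictlyPositive b := ha.of_le hab
  have hK : 0 < Kan' h p := kan'_pos hh hp
  have hhn : 0 < h * n := by positivity
  have hs' : spectrum ℝ ((h * n) • b ^ (-1 : ℝ)) ⊆ Set.Icc 1 h := by
    rw [spectrum_smul_rpow hb]
    rintro _ ⟨r, hr, rfl⟩
    have hr₀ : 0 < r := hb.spectrum_pos hr
    simp only [Real.rpow_neg_one, ← div_eq_mul_inv]
    exact ⟨(one_le_div hr₀).2 (hs hr).2,
      (div_le_iff₀ hr₀).2 (mul_le_mul_of_nonneg_left (hs hr).1 (by linarith))⟩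
  have hinv : (h * n) • b ^ (-1 : ℝ) ≤ (h * n) • a ^ (-1 : ℝ) :=
    smul_le_smul_of_nonneg_left (CStarAlgebra.rpow_neg_one_le_rpow_neg_one hab ha) hhn.le
  have hpow := rpow_le_kan'_smul_rpow_of_spectrum_subset_Icc_one hh hp ((hb.rpow b (-1)).smul hhn)
    hs' hinv
  rw [smul_rpow_rpow hb hhn, smul_rpow_rpow ha hhn, smul_comm,
    smul_le_smul_iff_of_pos_left (by positivity), neg_one_mul, ← mul_neg_one,
    ← CFC.rpow_rpow a _ _ (by positivity) ha] at hpow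
  have := le_smul_rpow_neg_one_comm (hb.rpow b _) (ha.rpow a p) hK hpow
  rwa [CFC.rpow_rpow b _ _ (by simpa using (zero_lt_one.trans hp).ne') hb, mul_assoc, neg_one_mul,
    neg_neg, mul_one] at this

lemma rpow_le_kan'_smul_rpow_of_le_smul_rpow_neg (hh : 1 < h) (hp : 1 < p) {m c r : ℝ}
    (hm : 0 < m) (hc : 0 < c) (hr : r ∈ Set.Icc (0 : ℝ) 1) (ha : IsStrictlyPositive a)
    (hb : IsStrictlyPositive b) (hs : spectrum ℝ b ⊆ Set.Icc m (h * m))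
    (hab : a ≤ c • b ^ (-r)) :
    a ^ p ≤ (Kan' h p * c ^ p) • b ^ (-(r * p)) := by
  have hspec : spectrum ℝ (c • b ^ (-r)) ⊆
      Set.Icc (c * (h * m) ^ (-r)) (h * (c * (h * m) ^ (-r))) := by
    rw [spectrum_smul_rpow hb]
    rintro _ ⟨z, hz, rfl⟩
    have hz₀ : 0 < z := hb.spectrum_pos hz
    refine ⟨mul_le_mul_of_nonneg_left
      (Real.rpow_le_rpow_of_nonpos hz₀ (hs hz).2 (neg_nonpos.2 hr.1)) hc.le, ?_⟩
    have hratio : 1 ≤ h * h ^ (-r) := by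
      calc 1 ≤ h ^ (1 + -r) := Real.one_le_rpow hh.le (by linarith [hr.2])
        _ = h * h ^ (-r) := by rw [Real.rpow_add (by linarith), Real.rpow_one]
    calc c * z ^ (-r) ≤ c * m ^ (-r) := mul_le_mul_of_nonneg_left
          (Real.rpow_le_rpow_of_nonpos hm (hs hz).1 (neg_nonpos.2 hr.1)) hc.le
      _ ≤ h * h ^ (-r) * (c * m ^ (-r)) := le_mul_of_one_le_left (by positivity) hratio
      _ = h * (c * (h * m) ^ (-r)) := by
          rw [Real.mul_rpow (by linarith) hm.le]
          ring
  have := rpow_le_kan'_smul_rpow hh hp (by positivity) ha hspec hab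
  rwa [smul_rpow_rpow hb hc, smul_smul, neg_mul] at this

end Kantorovich

section UnitaryConjugation

lemma unitary_conj_rpow (u : unitary R) (ha : IsStrictlyPositive a) (s : ℝ) :
    ((u : R) * a * star (u : R)) ^ s = u * a ^ s * star (u : R) := by
  have hpos : 0 ≤ (u : R) * a * star (u : R) := star_right_conjugate_nonneg ha.nonneg _
  have hcont : Continuous fun y : R => (u : R) * y * star (u : R) := by fun_prop
  rw [CFC.rpow_eq_cfc_real hpos, CFC.rpow_eq_cfc_real ha.nonneg]
  exact (StarAlgHomClass.map_cfc (S := ℂ) (Unitary.conjStarAlgAut ℂ R u) _ a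
    (continuousOn_rpow_spectrum ha s) hcont ha.isSelfAdjoint hpos.isSelfAdjoint).symm

-- The unitary factor of the polar decomposition.
lemma mul_rpow_neg_half_mem_unitary {T : R} (hT : IsUnit T) :
    T * (star T * T) ^ (-(1 / 2) : ℝ) ∈ unitary R := by
  have hP : IsStrictlyPositive (star T * T) :=
    (hT.star.mul hT).isStrictlyPositive (star_mul_self_nonneg T)
  refine (hT.mul (hP.rpow _ _).isUnit).mem_unitary_of_star_mul_self ?_
  rw [star_mul, (IsSelfAdjoint.of_nonneg CFC.rpow_nonneg).star_eq, ← mul_assoc, mul_assoc _ _ T,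
    CFC.conjugate_rpow_neg_one_half _ hP]

lemma mul_star_self_rpow {T : R} (hT : IsUnit T) (s : ℝ) :
    (T * star T) ^ s = T * (star T * T) ^ (s - 1) * star T := by
  set P := star T * T
  have hP : IsStrictlyPositive P :=
    (hT.star.mul hT).isStrictlyPositive (star_mul_self_nonneg T)
  have hconj : ∀ w : ℝ, T * P ^ (-(1 / 2) : ℝ) * P ^ w * star (T * P ^ (-(1 / 2) : ℝ)) =
      T * P ^ (w - 1) * star T := fun w => by
    have := rpow_conj_smul_rpow hP.isUnit 1 (-(1 / 2)) w
    simp only [one_smul] at this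
    rw [star_mul, (IsSelfAdjoint.of_nonneg CFC.rpow_nonneg).star_eq, ← mul_assoc, mul_assoc T,
      mul_assoc T, this]
    ring_nf
  have hTT := hconj 1
  rw [CFC.rpow_one P hP.nonneg, sub_self, CFC.rpow_zero P hP.nonneg, mul_one] at hTT
  rw [← hTT, ← hconj s]
  exact unitary_conj_rpow ⟨_, mul_rpow_neg_half_mem_unitary hT⟩ hP s

end UnitaryConjugation

/-- The weighted geometric mean `a ♯ₜ b` of strictly positive elements of a C⋆-algebra: the
counterpart of `geoMean` with the powers taken as `CFC.rpow`, so that their laws apply. -/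
def weightedGeomMean (a b : R) (t : ℝ) : R :=
  a ^ (1 / 2 : ℝ) * (a ^ (-(1 / 2) : ℝ) * b * a ^ (-(1 / 2) : ℝ)) ^ t * a ^ (1 / 2 : ℝ)

local notation:70 a:71 "♯[" t "]" b:71 => weightedGeomMean a b t

section WeightedGeomMean

variable {t : ℝ}

lemma isStrictlyPositive_weightedGeomMean (ha : IsStrictlyPositive a)
    (hb : IsStrictlyPositive b) (t : ℝ) : IsStrictlyPositive (a ♯[t] b) :=
  isStrictlyPositive_rpow_conj ha
    ((isStrictlyPositive_rpow_conj ha hb _).rpow _ t) _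

lemma weightedGeomMean_symm (ha : IsStrictlyPositive a) (hb : IsStrictlyPositive b) (t : ℝ) :
    a ♯[t] b = b ♯[1 - t] a := by
  set T := b ^ (-(1 / 2) : ℝ) * a ^ (1 / 2 : ℝ) with hT
  set X := a ^ (-(1 / 2) : ℝ) * b * a ^ (-(1 / 2) : ℝ) with hX
  have hXpos : IsStrictlyPositive X := isStrictlyPositive_rpow_conj ha hb _
  have hTunit : IsUnit T := (hb.rpow b _).isUnit.mul (ha.rpow a _).isUnit
  have hTstar : star T = a ^ (1 / 2 : ℝ) * b ^ (-(1 / 2) : ℝ) := by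
    rw [hT, star_mul, (IsSelfAdjoint.of_nonneg CFC.rpow_nonneg).star_eq,
      (IsSelfAdjoint.of_nonneg CFC.rpow_nonneg).star_eq]
  have hTTstar : T * star T = b ^ (-(1 / 2) : ℝ) * a * b ^ (-(1 / 2) : ℝ) := by
    have hsq : a ^ (1 / 2 : ℝ) * a ^ (1 / 2 : ℝ) = a := by
      rw [← CFC.sqrt_eq_rpow, CFC.sqrt_mul_sqrt_self a ha.nonneg]
    rw [hTstar, hT, mul_assoc, ← mul_assoc (a ^ (1 / 2 : ℝ)), hsq, mul_assoc]
  have hTstarT : star T * T = X ^ (-1 : ℝ) := by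
    have hsq : b ^ (-(1 / 2) : ℝ) * b ^ (-(1 / 2) : ℝ) = b ^ (-1 : ℝ) := by
      rw [← CFC.rpow_add hb.isUnit]
      norm_num
    rw [hX, rpow_conj_rpow_neg_one ha hb, neg_neg, hTstar, hT, mul_assoc,
      ← mul_assoc (b ^ (-(1 / 2) : ℝ)), hsq, mul_assoc]
  have hpow : (b ^ (-(1 / 2) : ℝ) * a * b ^ (-(1 / 2) : ℝ)) ^ (1 - t) =
      b ^ (-(1 / 2) : ℝ) * (a ♯[t] b) * b ^ (-(1 / 2) : ℝ) := by
    rw [← hTTstar, mul_star_self_rpow hTunit, hTstarT, CFC.rpow_rpow X _ _ (by norm_num) hXpos,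
      hTstar, hT, weightedGeomMean]
    simp only [mul_assoc, sub_sub_cancel_left, neg_mul_neg, one_mul, hX]
  exact ((rpow_conj_eq_iff hb _).2 (by rw [hpow])).symm

lemma weightedGeomMean_mono_right (ht : t ∈ Set.Icc (0 : ℝ) 1) {b' : R} (hb : b ≤ b') :
    a ♯[t] b ≤ a ♯[t] b' :=
  conjugate_le_conjugate_of_nonneg (CFC.rpow_le_rpow ht
    (conjugate_le_conjugate_of_nonneg hb CFC.rpow_nonneg)) CFC.rpow_nonneg

lemma weightedGeomMean_mono (ht : t ∈ Set.Icc (0 : ℝ) 1) {a' b' : R}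
    (ha : IsStrictlyPositive a) (hb : IsStrictlyPositive b) (haa' : a ≤ a') (hbb' : b ≤ b') :
    a ♯[t] b ≤ a' ♯[t] b' := by
  have hb' : IsStrictlyPositive b' := hb.of_le hbb'
  calc a ♯[t] b ≤ a ♯[t] b' := weightedGeomMean_mono_right ht hbb'
    _ = b' ♯[1 - t] a := weightedGeomMean_symm ha hb' t
    _ ≤ b' ♯[1 - t] a' := weightedGeomMean_mono_right (Set.Icc.mem_iff_one_sub_mem.1 ht) haa'
    _ = a' ♯[t] b' := (weightedGeomMean_symm (ha.of_le haa') hb' t).symm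

lemma smul_rpow_weightedGeomMean_smul_rpow (hx : IsStrictlyPositive x) {c d : ℝ} (hc : 0 < c)
    (hd : 0 < d) (u v t : ℝ) :
    (c • x ^ u) ♯[t] (d • x ^ v) = (c ^ (1 - t) * d ^ t) • x ^ ((1 - t) * u + t * v) := by
  have hscalar : c ^ (1 / 2 : ℝ) * (c ^ (-(1 / 2) : ℝ) * d * c ^ (-(1 / 2) : ℝ)) ^ t *
      c ^ (1 / 2 : ℝ) = c ^ (1 - t) * d ^ t := by
    rw [mul_right_comm (c ^ _), ← Real.rpow_add hc, mul_right_comm, ← Real.rpow_add hc,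
      Real.mul_rpow (by positivity) hd.le, ← Real.rpow_mul hc.le, ← mul_assoc, ← Real.rpow_add hc]
    ring_nf
  rw [weightedGeomMean, smul_rpow_rpow hx hc, smul_rpow_rpow hx hc]
  simp only [smul_rpow_mul_smul_rpow hx.isUnit]
  rw [smul_rpow_rpow hx (by positivity), smul_rpow_mul_smul_rpow hx.isUnit,
    smul_rpow_mul_smul_rpow hx.isUnit, hscalar]
  ring_nf

lemma eq_weightedGeomMean_rpow_neg_one_iff (ha : IsStrictlyPositive a) (hb : 0 ≤ b)
    (hx : 0 ≤ x) : x = a ^ (-1 : ℝ) ♯[1 / 2] b ↔ x * a * x = b := by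
  have hsq : a ^ (1 / 2 : ℝ) * x * a ^ (1 / 2 : ℝ) * (a ^ (1 / 2 : ℝ) * x * a ^ (1 / 2 : ℝ)) =
      a ^ (1 / 2 : ℝ) * (x * a * x) * a ^ (1 / 2 : ℝ) := by
    have hhalf : a ^ (1 / 2 : ℝ) * a ^ (1 / 2 : ℝ) = a := by
      rw [← CFC.sqrt_eq_rpow, CFC.sqrt_mul_sqrt_self a ha.nonneg]
    calc a ^ (1 / 2 : ℝ) * x * a ^ (1 / 2 : ℝ) * (a ^ (1 / 2 : ℝ) * x * a ^ (1 / 2 : ℝ))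
        = a ^ (1 / 2 : ℝ) * (x * (a ^ (1 / 2 : ℝ) * a ^ (1 / 2 : ℝ)) * x) * a ^ (1 / 2 : ℝ) := by
          simp only [mul_assoc]
      _ = a ^ (1 / 2 : ℝ) * (x * a * x) * a ^ (1 / 2 : ℝ) := by rw [hhalf]
  calc x = a ^ (-1 : ℝ) ♯[1 / 2] b
      ↔ x = a ^ (-(1 / 2) : ℝ) * CFC.sqrt (a ^ (1 / 2 : ℝ) * b * a ^ (1 / 2 : ℝ)) *
          a ^ (-(1 / 2) : ℝ) := by
        rw [weightedGeomMean, CFC.rpow_rpow a _ _ (by norm_num) ha,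
          CFC.rpow_rpow a _ _ (by norm_num) ha, CFC.sqrt_eq_rpow]
        norm_num
    _ ↔ CFC.sqrt (a ^ (1 / 2 : ℝ) * b * a ^ (1 / 2 : ℝ)) =
          a ^ (1 / 2 : ℝ) * x * a ^ (1 / 2 : ℝ) := by
        rw [← rpow_conj_eq_iff ha, eq_comm]
    _ ↔ a ^ (1 / 2 : ℝ) * (x * a * x) * a ^ (1 / 2 : ℝ) =
          a ^ (1 / 2 : ℝ) * b * a ^ (1 / 2 : ℝ) := by
        rw [CFC.sqrt_eq_iff _ _ (conjugate_nonneg_of_nonneg hb CFC.rpow_nonneg)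
          (conjugate_nonneg_of_nonneg hx CFC.rpow_nonneg), hsq]
    _ ↔ x * a * x = b := by
        rw [rpow_conj_eq_iff ha, rpow_neg_conj_rpow_conj ha]

end WeightedGeomMean

/-- The weighted spectral geometric mean `a spₜ b` of strictly positive elements of a C⋆-algebra:
the counterpart of `spMean` with the powers, including the inverse, taken as `CFC.rpow`. -/
def weightedSpectralMean (a b : R) (t : ℝ) : R :=
  (a ^ (-1 : ℝ) ♯[1 / 2] b) ^ t * a * (a ^ (-1 : ℝ) ♯[1 / 2] b) ^ t

section WeightedSpectralMean

variable {t : ℝ}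

lemma isStrictlyPositive_weightedSpectralMean (ha : IsStrictlyPositive a)
    (hb : IsStrictlyPositive b) (t : ℝ) : IsStrictlyPositive (weightedSpectralMean a b t) :=
  isStrictlyPositive_rpow_conj (isStrictlyPositive_weightedGeomMean (ha.rpow a _) hb _) ha t

-- The exponents `1` make this a conjugation by a power, as in `rpow_conj_le_smul_rpow_iff`.
lemma weightedGeomMean_rpow_neg_one_conj (ha : IsStrictlyPositive a) (hb : IsStrictlyPositive b) :
    (a ^ (-1 : ℝ) ♯[1 / 2] b) ^ (1 : ℝ) * a * (a ^ (-1 : ℝ) ♯[1 / 2] b) ^ (1 : ℝ) = b := by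
  have hx := isStrictlyPositive_weightedGeomMean (ha.rpow a (-1)) hb (1 / 2)
  rw [CFC.rpow_one _ hx.nonneg]
  exact (eq_weightedGeomMean_rpow_neg_one_iff ha hb.nonneg hx.nonneg).1 rfl

lemma weightedSpectralMean_symm (ha : IsStrictlyPositive a) (hb : IsStrictlyPositive b) (t : ℝ) :
    weightedSpectralMean a b t = weightedSpectralMean b a (1 - t) := by
  set x := a ^ (-1 : ℝ) ♯[1 / 2] b
  have hx : IsStrictlyPositive x := isStrictlyPositive_weightedGeomMean (ha.rpow a _) hb _
  have hxa : a = x ^ (-1 : ℝ) * b * x ^ (-1 : ℝ) :=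
    (rpow_conj_eq_iff hx 1).1 (weightedGeomMean_rpow_neg_one_conj ha hb)
  have hinv : x ^ (-1 : ℝ) = b ^ (-1 : ℝ) ♯[1 / 2] a :=
    (eq_weightedGeomMean_rpow_neg_one_iff hb ha.nonneg CFC.rpow_nonneg).2 hxa.symm
  calc weightedSpectralMean a b t = x ^ t * (x ^ (-1 : ℝ) * b * x ^ (-1 : ℝ)) * x ^ t := by
        rw [← hxa, weightedSpectralMean]
    _ = x ^ (t - 1) * b * x ^ (t - 1) := by
        rw [rpow_conj_rpow_conj hx.isUnit, ← sub_eq_add_neg]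
    _ = weightedSpectralMean b a (1 - t) := by
        rw [weightedSpectralMean, ← hinv, CFC.rpow_rpow x _ _ (by norm_num) hx, neg_one_mul,
          neg_sub]

lemma weightedSpectralMean_le_algebraMap_iff (ha : IsStrictlyPositive a)
    (hb : IsStrictlyPositive b) (t μ : ℝ) :
    weightedSpectralMean a b t ≤ algebraMap ℝ R μ ↔
      a ≤ μ • (a ^ (-1 : ℝ) ♯[1 / 2] b) ^ (-(2 * t)) := by
  have hx := isStrictlyPositive_weightedGeomMean (ha.rpow a (-1)) hb (1 / 2)
  rw [Algebra.algebraMap_eq_smul_one, ← CFC.rpow_zero _ hx.nonneg, weightedSpectralMean,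
    rpow_conj_le_smul_rpow_iff hx, zero_sub]

theorem weightedGeomMean_le_algebraMap_of_weightedSpectralMean_le (ha : IsStrictlyPositive a)
    (hb : IsStrictlyPositive b) (ht : t ∈ Set.Icc (0 : ℝ) 1) {μ : ℝ} (hμ : 0 < μ)
    (hle : weightedSpectralMean a b t ≤ algebraMap ℝ R μ) : a ♯[t] b ≤ algebraMap ℝ R μ := by
  set x := a ^ (-1 : ℝ) ♯[1 / 2] b
  have hx : IsStrictlyPositive x := isStrictlyPositive_weightedGeomMean (ha.rpow a _) hb _
  have hax : a ≤ μ • x ^ (-(2 * t)) := (weightedSpectralMean_le_algebraMap_iff ha hb t μ).1 hle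
  have hbx : b ≤ μ • x ^ (2 - 2 * t) := by
    rw [← weightedGeomMean_rpow_neg_one_conj ha hb, rpow_conj_le_smul_rpow_iff hx]
    ring_nf at hax ⊢
    exact hax
  calc a ♯[t] b ≤ (μ • x ^ (-(2 * t))) ♯[t] (μ • x ^ (2 - 2 * t)) :=
        weightedGeomMean_mono ht ha hb hax hbx
    _ = algebraMap ℝ R μ := by
        rw [smul_rpow_weightedGeomMean_smul_rpow hx hμ hμ, ← Real.rpow_add hμ,
          sub_add_cancel, Real.rpow_one, Algebra.algebraMap_eq_smul_one,
          ← CFC.rpow_zero x hx.nonneg]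
        ring_nf

theorem norm_weightedGeomMean_le_norm_weightedSpectralMean (ha : IsStrictlyPositive a)
    (hb : IsStrictlyPositive b) (ht : t ∈ Set.Icc (0 : ℝ) 1) :
    ‖a ♯[t] b‖ ≤ ‖weightedSpectralMean a b t‖ := by
  rcases subsingleton_or_nontrivial R with _ | _
  · rw [Subsingleton.elim (a ♯[t] b)]
  have hsp := isStrictlyPositive_weightedSpectralMean ha hb t
  rw [CStarAlgebra.norm_le_iff_le_algebraMap _ (norm_nonneg _)
    (isStrictlyPositive_weightedGeomMean ha hb t).nonneg]
  exact weightedGeomMean_le_algebraMap_of_weightedSpectralMean_le ha hb ht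
    (norm_pos_iff.2 hsp.isUnit.ne_zero) (IsSelfAdjoint.le_algebraMap_norm_self hsp.isSelfAdjoint)

section ReverseInequality

variable {h m s : ℝ}

lemma le_smul_rpow_of_weightedGeomMean_le (hh : 1 < h) (hm : 0 < m) (hs : s ∈ Set.Ioo (0 : ℝ) 1)
    (ha : IsStrictlyPositive a) (hb : IsStrictlyPositive b)
    (hspec : spectrum ℝ a ⊆ Set.Icc m (h * m)) {l : ℝ} (hl : 0 < l)
    (hle : a ♯[s] b ≤ algebraMap ℝ R l) :
    b ≤ (Kan' h (1 / s) * l ^ (1 / s)) • a ^ (1 - 1 / s) := by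
  have hX := isStrictlyPositive_rpow_conj ha hb (-(1 / 2))
  rw [Algebra.algebraMap_eq_smul_one, ← CFC.rpow_zero a ha.nonneg, weightedGeomMean,
    rpow_conj_le_smul_rpow_iff ha, zero_sub, mul_one_div_cancel two_ne_zero] at hle
  have hpow := rpow_le_kan'_smul_rpow_of_le_smul_rpow_neg hh ((one_lt_div hs.1).2 hs.2) hm hl
    ⟨zero_le_one, le_rfl⟩ (hX.rpow _ s) ha hspec hle
  rw [CFC.rpow_rpow _ _ _ hs.1.ne' hX, mul_one_div_cancel hs.1.ne', CFC.rpow_one _ hX.nonneg,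
    rpow_conj_le_smul_rpow_iff ha] at hpow
  ring_nf at hpow ⊢
  exact hpow

lemma weightedSpectralMean_le_algebraMap_of_le_smul_rpow (hh : 1 < h) (hm : 0 < m)
    (hs : 1 / 2 < s) (ha : IsStrictlyPositive a) (hb : IsStrictlyPositive b)
    (hspec : spectrum ℝ a ⊆ Set.Icc m (h * m)) {c : ℝ} (hc : 0 < c)
    (hle : b ≤ c • a ^ (1 - 1 / s)) :
    weightedSpectralMean a b s ≤ algebraMap ℝ R (Kan' h (2 * s) * c ^ s) := by
  set x := a ^ (-1 : ℝ) ♯[1 / 2] b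
  have hx : IsStrictlyPositive x := isStrictlyPositive_weightedGeomMean (ha.rpow a _) hb _
  have hK : 0 < Kan' h (2 * s) := kan'_pos hh (by linarith)
  have hx_le : x ≤ c ^ (1 / 2 : ℝ) • a ^ (-(1 / (2 * s))) := by
    calc x ≤ a ^ (-1 : ℝ) ♯[1 / 2] (c • a ^ (1 - 1 / s)) :=
          weightedGeomMean_mono_right (by norm_num) hle
      _ = c ^ (1 / 2 : ℝ) • a ^ (-(1 / (2 * s))) := by
          have := smul_rpow_weightedGeomMean_smul_rpow ha one_pos hc (-1) (1 - 1 / s) (1 / 2)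
          rw [one_smul, Real.one_rpow, one_mul] at this
          rw [this]
          ring_nf
  have hpow := rpow_le_kan'_smul_rpow_of_le_smul_rpow_neg hh (p := 2 * s) (by linarith) hm
    (by positivity) ⟨one_div_nonneg.2 (by linarith), (div_le_one (by linarith)).2 (by linarith)⟩
    hx ha hspec hx_le
  rw [one_div_mul_cancel (by linarith), ← Real.rpow_mul hc.le, ← mul_assoc,
    one_div_mul_cancel two_ne_zero, one_mul] at hpow
  have ha_le := le_smul_rpow_neg_one_comm (hx.rpow x _) ha (by positivity) hpow
  rwa [CFC.rpow_rpow x _ _ (by linarith) hx, mul_neg_one,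
    ← weightedSpectralMean_le_algebraMap_iff ha hb] at ha_le

theorem norm_weightedSpectralMean_le (hh : 1 < h) (hm : 0 < m) (hs : s ∈ Set.Ioo (1 / 2 : ℝ) 1)
    (ha : IsStrictlyPositive a) (hb : IsStrictlyPositive b)
    (hspec : spectrum ℝ a ⊆ Set.Icc m (h * m)) :
    ‖weightedSpectralMean a b s‖ ≤ Kan' h (2 * s) * Kan' h (1 / s) ^ s * ‖a ♯[s] b‖ := by
  rcases subsingleton_or_nontrivial R with _ | _
  · rw [Subsingleton.elim (weightedSpectralMean a b s) 0, Subsingleton.elim (a ♯[s] b) 0]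
    simp
  have hs₀ : 0 < s := by linarith [hs.1]
  have hK : 0 < Kan' h (2 * s) := kan'_pos hh (by linarith [hs.1])
  have hK' : 0 < Kan' h (1 / s) := kan'_pos hh ((one_lt_div hs₀).2 hs.2)
  have hgm := isStrictlyPositive_weightedGeomMean ha hb s
  have hl : 0 < ‖a ♯[s] b‖ := norm_pos_iff.2 hgm.isUnit.ne_zero
  have hb_le := le_smul_rpow_of_weightedGeomMean_le hh hm ⟨hs₀, hs.2⟩ ha hb hspec hl
    (IsSelfAdjoint.le_algebraMap_norm_self hgm.isSelfAdjoint)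
  have hsp_le := weightedSpectralMean_le_algebraMap_of_le_smul_rpow hh hm hs.1 ha hb hspec
    (by positivity) hb_le
  rw [Real.mul_rpow hK'.le (by positivity), ← Real.rpow_mul hl.le, one_div_mul_cancel hs₀.ne',
    Real.rpow_one, ← mul_assoc] at hsp_le
  exact (CStarAlgebra.norm_le_iff_le_algebraMap _ (by positivity)
    (isStrictlyPositive_weightedSpectralMean ha hb s).nonneg).2 hsp_le

end ReverseInequality

end WeightedSpectralMean

theorem stmt_6_general {m M t : ℝ} (hm : 0 < m) (hmM : m < M) (ha : IsStrictlyPositive a)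
    (hb₁ : algebraMap ℝ R m ≤ b) (hb₂ : b ≤ algebraMap ℝ R M) (ht₁ : 0 ≤ t) (ht₂ : t ≤ 1 / 2) :
    (Kan' (M / m) (2 * (1 - t)))⁻¹ * Kan' (M / m) (1 / (1 - t)) ^ (t - 1) *
        ‖weightedSpectralMean a b t‖ ≤ ‖a ♯[t] b‖ ∧
      ‖a ♯[t] b‖ ≤ ‖weightedSpectralMean a b t‖ := by
  have hb : IsStrictlyPositive b := (isStrictlyPositive_algebraMap hm).of_le hb₁
  refine ⟨?_, norm_weightedGeomMean_le_norm_weightedSpectralMean ha hb ⟨ht₁, by linarith⟩⟩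
  -- At the endpoints the lower bound is zero: `Kan' _ 1` is a division by zero.
  rcases ht₁.eq_or_lt with rfl | ht₁
  · simp [Kan', Real.rpow_neg_one]
  rcases ht₂.eq_or_lt with rfl | ht₂
  · norm_num [Kan']
  have hh : 1 < M / m := (one_lt_div hm).2 hmM
  have hspec : spectrum ℝ b ⊆ Set.Icc m (M / m * m) := fun r hr => by
    rw [div_mul_cancel₀ M hm.ne']
    exact ⟨(algebraMap_le_iff_le_spectrum hb.isSelfAdjoint).1 hb₁ r hr,
      (le_algebraMap_iff_spectrum_le hb.isSelfAdjoint).1 hb₂ r hr⟩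
  have hK : 0 < Kan' (M / m) (2 * (1 - t)) := kan'_pos hh (by linarith)
  have hK' : 0 < Kan' (M / m) (1 / (1 - t)) :=
    kan'_pos hh ((one_lt_div (by linarith)).2 (by linarith))
  rw [weightedGeomMean_symm ha hb, weightedSpectralMean_symm ha hb, ← neg_sub 1 t,
    Real.rpow_neg hK'.le, ← mul_inv, inv_mul_le_iff₀ (by positivity)]
  exact norm_weightedSpectralMean_le hh hm ⟨by linarith, by linarith⟩ hb ha hspec

end CStarAlgebra

section Operator

variable {A B : H →L[ℂ] H}

lemma opPow_eq_rpow (hA : 0 ≤ A) (t : ℝ) : opPow A t = A ^ t :=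
  (CFC.rpow_eq_cfc_real hA).symm

lemma geoMean_eq_weightedGeomMean (hA : 0 ≤ A) (hB : 0 ≤ B) (t : ℝ) :
    geoMean A B t = weightedGeomMean A B t := by
  rw [geoMean, opPow_eq_rpow hA, opPow_eq_rpow hA,
    opPow_eq_rpow (conjugate_nonneg_of_nonneg hB CFC.rpow_nonneg), weightedGeomMean]

lemma spMean_eq_weightedSpectralMean (hA : IsStrictlyPositive A) (hB : IsStrictlyPositive B)
    (t : ℝ) : spMean A B t = weightedSpectralMean A B t := by
  have hx := isStrictlyPositive_weightedGeomMean (hA.rpow A (-1)) hB (1 / 2)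
  rw [spMean, CFC.inverse_eq_rpow_neg_one hA, geoMean_eq_weightedGeomMean CFC.rpow_nonneg hB.nonneg,
    opPow_eq_rpow hx.nonneg, weightedSpectralMean]

end Operator

/-- Theorem 3.1 (iii): for `0 ≤ t ≤ 1/2` and `h = M/m`,
`K(h,2(1-t))⁻¹ K(h,1/(1-t))^(t-1) ‖A spₜ B‖ ≤ ‖A ♯ₜ B‖ ≤ ‖A spₜ B‖`. -/
theorem stmt_6 (A B : H →L[ℂ] H) (m M t : ℝ) (hm : 0 < m) (hmM : m < M)
    (hA₁ : (m : ℂ) • (1 : H →L[ℂ] H) ≤ A) (hA₂ : A ≤ (M : ℂ) • (1 : H →L[ℂ] H))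
    (hB₁ : (m : ℂ) • (1 : H →L[ℂ] H) ≤ B) (hB₂ : B ≤ (M : ℂ) • (1 : H →L[ℂ] H))
    (ht₁ : 0 ≤ t) (ht₂ : t ≤ 1/2) (h : ℝ) (hh : h = M / m) :
    (Kan' h (2 * (1 - t)))⁻¹ * Kan' h (1 / (1 - t)) ^ (t - 1) * ‖spMean A B t‖ ≤
        ‖geoMean A B t‖ ∧
      ‖geoMean A B t‖ ≤ ‖spMean A B t‖ := by
  have hscalar (c : ℝ) : (c : ℂ) • (1 : H →L[ℂ] H) = algebraMap ℝ (H →L[ℂ] H) c :=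
    (Algebra.algebraMap_eq_smul_one c).symm
  rw [hscalar] at hA₁ hB₁ hB₂
  have hA : IsStrictlyPositive A := (isStrictlyPositive_algebraMap hm).of_le hA₁
  have hB : IsStrictlyPositive B := (isStrictlyPositive_algebraMap hm).of_le hB₁
  rw [hh, geoMean_eq_weightedGeomMean hA.nonneg hB.nonneg, spMean_eq_weightedSpectralMean hA hB]
  exact stmt_6_general hm hmM hA hB₁ hB₂ ht₁ ht₂
end
end

section
/- Let A and B be n×n positive definite complex matrices. Then A sp_{−1} B ≺_log A B^{−1} A. -/
noncomputable section

open Matrix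
open scoped ComplexOrder

variable {n : ℕ}

/-- Real power of a matrix, via the (Hermitian) continuous functional calculus,
i.e. via diagonalization for Hermitian matrices. -/
def mPow (A : Matrix (Fin n) (Fin n) ℂ) (t : ℝ) : Matrix (Fin n) (Fin n) ℂ :=
  cfc (fun x : ℝ => x ^ t) A

/-- The logarithm of a matrix, via diagonalization for Hermitian matrices. -/
def mLog (A : Matrix (Fin n) (Fin n) ℂ) : Matrix (Fin n) (Fin n) ℂ :=
  cfc Real.log A

/-- The weighted geometric mean `A ♯ₜ B = A^(1/2) (A^(-1/2) B A^(-1/2))^t A^(1/2)`. -/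
def mGeo (A B : Matrix (Fin n) (Fin n) ℂ) (t : ℝ) : Matrix (Fin n) (Fin n) ℂ :=
  mPow A (1/2) * mPow (mPow A (-(1/2)) * B * mPow A (-(1/2))) t * mPow A (1/2)

/-- The weighted spectral geometric mean `A spₜ B = (A⁻¹ ♯ B)^t A (A⁻¹ ♯ B)^t`,
where `A ♯ B` is the (unweighted, `t = 1/2`) geometric mean. -/
def mSp (A B : Matrix (Fin n) (Fin n) ℂ) (t : ℝ) : Matrix (Fin n) (Fin n) ℂ :=
  mPow (mGeo A⁻¹ B (1/2)) t * A * mPow (mGeo A⁻¹ B (1/2)) t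

/-- The eigenvalues of a Hermitian matrix, listed in decreasing order
(junk value `0` for non-Hermitian matrices). -/
def eigsDec (A : Matrix (Fin n) (Fin n) ℂ) : Fin n → ℝ :=
  if hA : A.IsHermitian then
    fun j => (hA.eigenvalues ∘ Tuple.sort hA.eigenvalues) j.rev
  else 0

/-- Log-majorization `X ≺_log Y`: the products of the `k` largest eigenvalues satisfy
`∏_{j=1}^k λ_j(X) ≤ ∏_{j=1}^k λ_j(Y)` for `k = 1, …, n-1`, and `det X = det Y`. -/
def LogMaj (X Y : Matrix (Fin n) (Fin n) ℂ) : Prop :=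
  (∀ k : ℕ, k ≤ n - 1 →
      ∏ j ∈ Finset.univ.filter (fun j : Fin n => (j : ℕ) < k), eigsDec X j ≤
        ∏ j ∈ Finset.univ.filter (fun j : Fin n => (j : ℕ) < k), eigsDec Y j) ∧
    X.det = Y.det

/-!
With `G = A⁻¹ ♯ B` and `H = G⁻¹`, the Riccati equation `G A G = B` turns the two sides into
`X = H A H` and `Y = A (H A⁻¹ H) A`.

If `M` is positive definite with eigenvalues `λ₁ ≥ ⋯ ≥ λₙ` and `W` is any `n × k` matrix, then
`det (Wᴴ M W) ≤ λ₁ ⋯ λₖ det (Wᴴ W)`: replace `M` by the larger `c max (M / c, 1)` with `c = λₖ₊₁`,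
and use `det (Wᴴ N W) ≤ det N det (Wᴴ W)` for `N ≥ 1`.

Let the columns of `V` be orthonormal eigenvectors of `X` for its top `k` eigenvalues, and let `p`
and `q` be the products of the top `k` eigenvalues of `X` and `Y`. For `W = H V` the bound gives
`p² det (Vᴴ A⁻¹ V) = det (Wᴴ Y W) ≤ q det (Wᴴ W)`, and, applied to `X` and `X ^ (-1/2) W`,
`det (Wᴴ W) ≤ p det (Wᴴ X⁻¹ W) = p det (Vᴴ A⁻¹ V)`. Hence `p ≤ q`.
-/

section Determinant

open scoped MatrixOrder

variable {𝕜 ι κ : Type*} [RCLike 𝕜] [Fintype ι] [Fintype κ] [DecidableEq κ]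

theorem det_conjTranspose_mul_mul_eq_zero {Z : Matrix ι κ 𝕜} (hZ : (Zᴴ * Z).det = 0)
    (M : Matrix ι ι 𝕜) : (Zᴴ * M * Z).det = 0 := by
  obtain ⟨v, hv, hZv⟩ := exists_mulVec_eq_zero_iff.2 hZ
  rw [conjTranspose_mul_self_mulVec_eq_zero] at hZv
  exact exists_mulVec_eq_zero_iff.1 ⟨v, hv, by rw [← mulVec_mulVec, hZv, mulVec_zero]⟩

variable [DecidableEq ι]

theorem posDef_mul_mul_self {A H : Matrix ι ι 𝕜} (hA : A.PosDef) (hH : H.IsHermitian)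
    (hH' : IsUnit H) : (H * A * H).PosDef := by
  have h := (IsUnit.posDef_star_left_conjugate_iff hH').2 hA
  rwa [star_eq_conjTranspose, hH.eq] at h

theorem det_cfc {M : Matrix ι ι 𝕜} (hM : M.IsHermitian) (f : ℝ → ℝ) :
    (cfc f M).det = ∏ i, (f (hM.eigenvalues i) : 𝕜) := by
  rw [hM.cfc_eq]
  simp [IsHermitian.cfc, -Unitary.conjStarAlgAut_apply]

theorem one_le_det_of_one_le {M : Matrix ι ι 𝕜} (hM : 1 ≤ M) : 1 ≤ M.det := by
  have hHerm : M.IsHermitian := (nonneg_iff_posSemidef.1 (zero_le_one.trans hM)).isHermitian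
  have hspec : ∀ x ∈ spectrum ℝ M, 1 ≤ x := (CFC.one_le_iff M hHerm).1 hM
  rw [hHerm.det_eq_prod_eigenvalues, ← RCLike.ofReal_prod]
  have h : 1 ≤ ∏ i, hHerm.eigenvalues i :=
    Finset.one_le_prod fun i _ => hspec _ (hHerm.eigenvalues_mem_spectrum_real i)
  exact_mod_cast h

theorem det_le_det_of_le {P Q : Matrix ι ι 𝕜} (hP : 0 ≤ P) (hPQ : P ≤ Q) : P.det ≤ Q.det := by
  have hP' : P.PosSemidef := nonneg_iff_posSemidef.1 hP
  by_cases hdet : P.det = 0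
  · rw [hdet]
    exact (nonneg_iff_posSemidef.1 (hP.trans hPQ)).det_nonneg
  obtain ⟨R, hR⟩ := CStarAlgebra.nonneg_iff_eq_star_mul_self.1 (sub_nonneg.2 hPQ)
  obtain rfl : Q = P + Rᴴ * R := by rw [← star_eq_conjTranspose, ← hR]; abel
  have hRPR : 0 ≤ R * P⁻¹ * Rᴴ := (hP'.inv.mul_mul_conjTranspose_same R).nonneg
  rw [det_add_mul _ _ (isUnit_iff_ne_zero.2 hdet)]
  exact le_mul_of_one_le_right hP'.det_nonneg (one_le_det_of_one_le (le_add_of_nonneg_right hRPR))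

theorem mul_inv_mul_conjTranspose_le_one {Z : Matrix ι κ 𝕜} (hZ : IsUnit (Zᴴ * Z).det) :
    Z * (Zᴴ * Z)⁻¹ * Zᴴ ≤ 1 := by
  refine IsStarProjection.le_one ⟨?_, ?_⟩
  · calc Z * (Zᴴ * Z)⁻¹ * Zᴴ * (Z * (Zᴴ * Z)⁻¹ * Zᴴ)
        = Z * ((Zᴴ * Z)⁻¹ * (Zᴴ * Z)) * (Zᴴ * Z)⁻¹ * Zᴴ := by simp only [Matrix.mul_assoc]
      _ = Z * (Zᴴ * Z)⁻¹ * Zᴴ := by rw [nonsing_inv_mul _ hZ, Matrix.mul_one]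
  · exact (posSemidef_conjTranspose_mul_self Z).inv.mul_mul_conjTranspose_same Z |>.1

theorem det_conjTranspose_mul_mul_le_of_one_le (Z : Matrix ι κ 𝕜) {M : Matrix ι ι 𝕜}
    (hM : 1 ≤ M) : (Zᴴ * M * Z).det ≤ (Zᴴ * Z).det * M.det := by
  by_cases hdet : (Zᴴ * Z).det = 0
  · rw [det_conjTranspose_mul_mul_eq_zero hdet, hdet, zero_mul]
  replace hdet := isUnit_iff_ne_zero.2 hdet
  obtain ⟨R, hR⟩ := CStarAlgebra.nonneg_iff_eq_star_mul_self.1 (sub_nonneg.2 hM)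
  obtain rfl : M = 1 + Rᴴ * R := by rw [← star_eq_conjTranspose, ← hR]; abel
  have hGram := posSemidef_conjTranspose_mul_self Z
  have hnonneg : 0 ≤ R * (Z * (Zᴴ * Z)⁻¹ * Zᴴ) * Rᴴ :=
    ((hGram.inv.mul_mul_conjTranspose_same Z).mul_mul_conjTranspose_same R).nonneg
  have hproj : R * (Z * (Zᴴ * Z)⁻¹ * Zᴴ) * Rᴴ ≤ R * Rᴴ := by
    simpa only [mul_one, star_eq_conjTranspose] using
      star_right_conjugate_le_conjugate (mul_inv_mul_conjTranspose_le_one hdet) R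
  calc (Zᴴ * (1 + Rᴴ * R) * Z).det
      = (Zᴴ * Z + (Zᴴ * Rᴴ) * (R * Z)).det := by
        simp only [Matrix.mul_add, Matrix.add_mul, Matrix.mul_one, Matrix.mul_assoc]
    _ = (Zᴴ * Z).det * (1 + R * (Z * (Zᴴ * Z)⁻¹ * Zᴴ) * Rᴴ).det := by
        rw [det_add_mul _ _ hdet]
        simp only [Matrix.mul_assoc]
    _ ≤ (Zᴴ * Z).det * (1 + R * Rᴴ).det := by
        gcongr
        · exact hGram.det_nonneg
        · exact det_le_det_of_le (add_nonneg zero_le_one hnonneg) (add_le_add_right hproj 1)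
    _ = (Zᴴ * Z).det * (1 + Rᴴ * R).det := by rw [det_one_add_mul_comm R]

theorem le_smul_cfc_max {Y : Matrix ι ι 𝕜} (hY : Y.IsHermitian) {c : ℝ} (hc : 0 < c) :
    Y ≤ c • cfc (fun x => max (x / c) 1) Y := by
  have hY' : IsSelfAdjoint Y := hY
  have hcont {f : ℝ → ℝ} : ContinuousOn f (spectrum ℝ Y) := Y.finite_real_spectrum.continuousOn _
  calc Y = cfc (fun x : ℝ => c • (x / c)) Y := by
        simp only [smul_eq_mul, mul_div_cancel₀ _ hc.ne', cfc_id' ℝ Y]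
    _ ≤ cfc (fun x : ℝ => c • max (x / c) 1) Y :=
        cfc_mono (fun x _ => smul_le_smul_of_nonneg_left (le_max_left _ _) hc.le) hcont hcont
    _ = c • cfc (fun x => max (x / c) 1) Y := cfc_smul c _ Y hcont

theorem det_conjTranspose_mul_mul_le_prod_max {Y : Matrix ι ι 𝕜} (hY : Y.PosSemidef) {c : ℝ}
    (hc : 0 < c) (W : Matrix ι κ 𝕜) :
    (Wᴴ * Y * W).det ≤
      ((c ^ Fintype.card κ * ∏ i, max (hY.isHermitian.eigenvalues i / c) 1 : ℝ) : 𝕜) *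
        (Wᴴ * W).det := by
  set M := cfc (fun x : ℝ => max (x / c) 1) Y
  have hYM : Y ≤ c • M := le_smul_cfc_max hY.isHermitian hc
  have hM : 1 ≤ M := one_le_cfc _ Y (fun x _ => le_max_right _ _)
    (Y.finite_real_spectrum.continuousOn _) hY.isHermitian
  calc (Wᴴ * Y * W).det
      ≤ (Wᴴ * (c • M) * W).det :=
        det_le_det_of_le (hY.conjTranspose_mul_mul_same W).nonneg <| by
          rw [Matrix.le_iff, ← Matrix.sub_mul, ← Matrix.mul_sub]
          exact (Matrix.le_iff.1 hYM).conjTranspose_mul_mul_same W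
    _ = (c : 𝕜) ^ Fintype.card κ * (Wᴴ * M * W).det := by
        rw [Matrix.mul_smul, Matrix.smul_mul, RCLike.real_smul_eq_coe_smul (K := 𝕜), det_smul]
    _ ≤ (c : 𝕜) ^ Fintype.card κ * ((Wᴴ * W).det * M.det) := by
        gcongr
        exact det_conjTranspose_mul_mul_le_of_one_le W hM
    _ = _ := by
        rw [det_cfc hY.isHermitian]
        push_cast
        ring

theorem exists_isometry_mul_eq_mul_diagonal {X : Matrix ι ι 𝕜} (hX : X.IsHermitian) {f : κ → ι}
    (hf : Function.Injective f) :
    ∃ V : Matrix ι κ 𝕜, Vᴴ * V = 1 ∧ X * V = V * diagonal fun j => (hX.eigenvalues (f j) : 𝕜) := by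
  set U : Matrix ι ι 𝕜 := ↑hX.eigenvectorUnitary with hU
  refine ⟨U.submatrix id f, ?_, ?_⟩
  · have hUU : Uᴴ * U = 1 := (Unitary.mem_iff.1 hX.eigenvectorUnitary.2).1
    rw [conjTranspose_submatrix, ← submatrix_mul _ _ _ _ _ Function.bijective_id, hUU,
      submatrix_one f hf]
  · ext i j
    have h := congrFun (hX.mulVec_eigenvectorBasis (f j)) i
    rw [mul_diagonal, mul_comm]
    simpa [mul_apply, mulVec, dotProduct, hU, RCLike.real_smul_eq_coe_mul] using h

end Determinant

section EigsDec

open scoped MatrixOrder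

variable {X : Matrix (Fin n) (Fin n) ℂ}

theorem exists_perm_eigsDec_eq (hX : X.IsHermitian) :
    ∃ σ : Equiv.Perm (Fin n), eigsDec X = hX.eigenvalues ∘ σ :=
  ⟨Fin.revPerm.trans (Tuple.sort hX.eigenvalues), by rw [eigsDec, dif_pos hX]; rfl⟩

theorem eigsDec_antitone (X : Matrix (Fin n) (Fin n) ℂ) : Antitone (eigsDec X) := by
  rw [eigsDec]
  split_ifs with hX
  · exact (Tuple.monotone_sort hX.eigenvalues).comp_antitone Fin.rev_anti
  · exact antitone_const

theorem eigsDec_pos (hX : X.PosDef) (j : Fin n) : 0 < eigsDec X j := by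
  obtain ⟨σ, hσ⟩ := exists_perm_eigsDec_eq hX.isHermitian
  rw [hσ]
  exact hX.eigenvalues_pos _

theorem prod_Iio_eigsDec_pos (hX : X.PosDef) (k : Fin n) : 0 < ∏ j ∈ Finset.Iio k, eigsDec X j :=
  Finset.prod_pos fun j _ => eigsDec_pos hX j

theorem pow_mul_prod_max_eigsDec (hX : X.PosDef) (k : Fin n) :
    eigsDec X k ^ (k : ℕ) * ∏ i, max (hX.isHermitian.eigenvalues i / eigsDec X k) 1 =
      ∏ j ∈ Finset.Iio k, eigsDec X j := by
  have hc := eigsDec_pos hX k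
  have hmax : ∏ j, max (eigsDec X j / eigsDec X k) 1 =
      ∏ j ∈ Finset.Iio k, eigsDec X j / eigsDec X k := by
    refine (Finset.prod_subset_one_on_sdiff (Finset.subset_univ _)
      (fun j hj => ?_) fun j hj => ?_).symm
    · have hkj : k ≤ j := by simpa using hj
      exact max_eq_right ((div_le_one hc).2 (eigsDec_antitone X hkj))
    · exact (max_eq_left ((one_le_div hc).2 (eigsDec_antitone X (Finset.mem_Iio.1 hj).le))).symm
  obtain ⟨σ, hσ⟩ := exists_perm_eigsDec_eq hX.isHermitian
  have hperm : ∏ i, max (hX.isHermitian.eigenvalues i / eigsDec X k) 1 =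
      ∏ j, max (eigsDec X j / eigsDec X k) 1 := by
    rw [hσ]
    exact (Equiv.prod_comp σ fun i => max (hX.isHermitian.eigenvalues i / _) 1).symm
  rw [hperm, hmax, Finset.prod_div_distrib, Finset.prod_const, Fin.card_Iio]
  field_simp

theorem det_conjTranspose_mul_mul_le_prod_eigsDec (hX : X.PosDef) (k : Fin n)
    (W : Matrix (Fin n) (Finset.Iio k) ℂ) :
    (Wᴴ * X * W).det ≤ ((∏ j ∈ Finset.Iio k, eigsDec X j : ℝ) : ℂ) * (Wᴴ * W).det := by
  have h := det_conjTranspose_mul_mul_le_prod_max hX.posSemidef (eigsDec_pos hX k) W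
  rwa [Fintype.card_coe, Fin.card_Iio, pow_mul_prod_max_eigsDec hX k] at h

theorem det_conjTranspose_mul_le_prod_eigsDec (hX : X.PosDef) (k : Fin n)
    (Z : Matrix (Fin n) (Finset.Iio k) ℂ) :
    (Zᴴ * Z).det ≤ ((∏ j ∈ Finset.Iio k, eigsDec X j : ℝ) : ℂ) * (Zᴴ * X⁻¹ * Z).det := by
  have hX' := hX.isStrictlyPositive
  set S := X ^ (-(1 / 2) : ℝ)
  have hS : Sᴴ = S := CFC.rpow_nonneg.isSelfAdjoint
  have hSS : S * S = X⁻¹ := by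
    rw [← CFC.rpow_add hX'.isUnit, nonsing_inv_eq_ringInverse, CFC.inverse_eq_rpow_neg_one hX']
    norm_num
  have hSX : S * X * S = 1 := by
    rw [mul_eq_one_comm, ← mul_assoc, hSS, nonsing_inv_mul _ hX.det_pos.ne'.isUnit]
  have h := det_conjTranspose_mul_mul_le_prod_eigsDec hX k (S * Z)
  have hnum : (S * Z)ᴴ * X * (S * Z) = Zᴴ * Z := by
    calc _ = Zᴴ * (S * X * S) * Z := by simp only [conjTranspose_mul, hS, Matrix.mul_assoc]
      _ = _ := by rw [hSX, Matrix.mul_one]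
  have hden : (S * Z)ᴴ * (S * Z) = Zᴴ * X⁻¹ * Z := by
    simp only [conjTranspose_mul, hS, ← hSS, Matrix.mul_assoc]
  rwa [hnum, hden] at h

theorem exists_isometry_mul_eq_mul_det_eq (hX : X.IsHermitian) (k : Fin n) :
    ∃ (V : Matrix (Fin n) (Finset.Iio k) ℂ) (D : Matrix (Finset.Iio k) (Finset.Iio k) ℂ),
      Vᴴ * V = 1 ∧ X * V = V * D ∧ D.IsHermitian ∧
        D.det = (∏ j ∈ Finset.Iio k, eigsDec X j : ℝ) := by
  obtain ⟨σ, hσ⟩ := exists_perm_eigsDec_eq hX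
  have hinj : Function.Injective fun j : Finset.Iio k => σ j :=
    σ.injective.comp Subtype.val_injective
  obtain ⟨V, hV, hXV⟩ := exists_isometry_mul_eq_mul_diagonal hX hinj
  refine ⟨V, _, hV, hXV, isHermitian_diagonal_of_self_adjoint _ (by ext; simp), ?_⟩
  rw [det_diagonal, hσ, Complex.ofReal_prod]
  exact Finset.prod_coe_sort _ fun j => (hX.eigenvalues (σ j) : ℂ)

end EigsDec

section LogMajorization

variable {A H : Matrix (Fin n) (Fin n) ℂ}

theorem prod_Iio_eigsDec_mul_mul_le (hA : A.PosDef) (hH : H.IsHermitian) (hH' : IsUnit H)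
    (k : Fin n) :
    ∏ j ∈ Finset.Iio k, eigsDec (H * A * H) j ≤
      ∏ j ∈ Finset.Iio k, eigsDec (A * (H * A⁻¹ * H) * A) j := by
  set X := H * A * H with hX_eq
  set Y := A * (H * A⁻¹ * H) * A with hY_eq
  have hX : X.PosDef := posDef_mul_mul_self hA hH hH'
  have hY : Y.PosDef :=
    posDef_mul_mul_self (posDef_mul_mul_self hA.inv hH hH') hA.isHermitian hA.isUnit
  set p := ∏ j ∈ Finset.Iio k, eigsDec X j
  set q := ∏ j ∈ Finset.Iio k, eigsDec Y j
  obtain ⟨V, D, hV, hXV, hD, hD_det⟩ := exists_isometry_mul_eq_mul_det_eq hX.isHermitian k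
  have hY_compr : (H * V)ᴴ * Y * (H * V) = D * (Vᴴ * A⁻¹ * V) * D := by
    calc (H * V)ᴴ * Y * (H * V) = (X * V)ᴴ * A⁻¹ * (X * V) := by
          simp only [hX_eq, hY_eq, conjTranspose_mul, hH.eq, hA.isHermitian.eq, Matrix.mul_assoc]
      _ = D * (Vᴴ * A⁻¹ * V) * D := by
          simp only [hXV, conjTranspose_mul, hD.eq, Matrix.mul_assoc]
  have hX_compr : (H * V)ᴴ * X⁻¹ * (H * V) = Vᴴ * A⁻¹ * V := by
    have hHdet : IsUnit H.det := (isUnit_iff_isUnit_det H).1 hH'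
    simp only [hX_eq, Matrix.mul_inv_rev, conjTranspose_mul, hH.eq, Matrix.mul_assoc,
      mul_nonsing_inv_cancel_left _ _ hHdet, nonsing_inv_mul_cancel_left _ _ hHdet]
  have hchain : (p : ℂ) * (p * (Vᴴ * A⁻¹ * V).det) ≤ q * (p * (Vᴴ * A⁻¹ * V).det) :=
    calc (p : ℂ) * (p * (Vᴴ * A⁻¹ * V).det) = ((H * V)ᴴ * Y * (H * V)).det := by
          rw [hY_compr, det_mul, det_mul, hD_det]
          ring
      _ ≤ q * ((H * V)ᴴ * (H * V)).det := det_conjTranspose_mul_mul_le_prod_eigsDec hY k (H * V)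
      _ ≤ q * (p * (Vᴴ * A⁻¹ * V).det) := by
          have hq : (0 : ℂ) ≤ q := by exact_mod_cast (prod_Iio_eigsDec_pos hY k).le
          rw [← hX_compr]
          exact mul_le_mul_of_nonneg_left (det_conjTranspose_mul_le_prod_eigsDec hX k (H * V)) hq
  have hV_inj : Function.Injective V.mulVec :=
    Function.LeftInverse.injective (g := Vᴴ.mulVec) fun v => by
      rw [mulVec_mulVec, hV, one_mulVec]
  have hpos : 0 < (p : ℂ) * (Vᴴ * A⁻¹ * V).det :=
    mul_pos (by exact_mod_cast prod_Iio_eigsDec_pos hX k)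
      (hA.inv.conjTranspose_mul_mul_same hV_inj).det_pos
  exact_mod_cast le_of_mul_le_mul_right hchain hpos

theorem logMaj_mul_mul_self (hA : A.PosDef) (hH : H.IsHermitian) (hH' : IsUnit H) :
    LogMaj (H * A * H) (A * (H * A⁻¹ * H) * A) := by
  refine ⟨fun k hk => ?_, ?_⟩
  · rcases n.eq_zero_or_pos with rfl | hn
    · simp
    have hfilter : Finset.univ.filter (fun j : Fin n => (j : ℕ) < k) =
        Finset.Iio (⟨k, by lia⟩ : Fin n) := by
      ext j
      simp [Fin.lt_def]
    rw [hfilter]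
    exact prod_Iio_eigsDec_mul_mul_le hA hH hH' _
  · have hAdet : A.det * A⁻¹.det = 1 := by
      rw [← det_mul, mul_nonsing_inv _ hA.det_pos.ne'.isUnit, det_one]
    simp only [det_mul]
    linear_combination (-(H.det * A.det * H.det)) * hAdet

end LogMajorization

section GeometricMean

open scoped MatrixOrder

variable {A B C : Matrix (Fin n) (Fin n) ℂ}

theorem mPow_eq_rpow (hA : A.PosSemidef) (t : ℝ) : mPow A t = A ^ t :=
  (CFC.rpow_eq_cfc_real hA.nonneg).symm

theorem posDef_mPow (hA : A.PosDef) (t : ℝ) : (mPow A t).PosDef := by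
  rw [mPow_eq_rpow hA.posSemidef]
  exact (hA.isStrictlyPositive.rpow A t).posDef

theorem mPow_neg_one (hA : A.PosDef) : mPow A (-1) = A⁻¹ := by
  rw [mPow_eq_rpow hA.posSemidef, nonsing_inv_eq_ringInverse,
    CFC.inverse_eq_rpow_neg_one hA.isStrictlyPositive]

theorem mPow_add (hA : A.PosDef) (s t : ℝ) : mPow A s * mPow A t = mPow A (s + t) := by
  simp only [mPow_eq_rpow hA.posSemidef]
  exact (CFC.rpow_add hA.isUnit).symm

theorem mPow_zero (hA : A.IsHermitian) : mPow A 0 = 1 := by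
  simp only [mPow, Real.rpow_zero]
  exact cfc_const_one ℝ A hA

theorem mPow_half_mul_self (hA : A.PosSemidef) : mPow A (1 / 2) * mPow A (1 / 2) = A := by
  rw [mPow_eq_rpow hA, ← CFC.sqrt_eq_rpow, CFC.sqrt_mul_sqrt_self A hA.nonneg]

theorem posDef_mGeo (hC : C.PosDef) (hB : B.PosDef) (t : ℝ) : (mGeo C B t).PosDef := by
  have hpow (s : ℝ) : (mPow C s).PosDef := posDef_mPow hC s
  have hinner : (mPow C (-(1 / 2)) * B * mPow C (-(1 / 2))).PosDef :=
    posDef_mul_mul_self hB (hpow _).isHermitian (hpow _).isUnit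
  exact posDef_mul_mul_self (posDef_mPow hinner t) (hpow _).isHermitian (hpow _).isUnit

theorem mGeo_mul_inv_mul_mGeo (hC : C.PosDef) (hB : B.PosSemidef) :
    mGeo C B (1 / 2) * C⁻¹ * mGeo C B (1 / 2) = B := by
  set S := mPow C (1 / 2)
  set R := mPow C (-(1 / 2))
  set T := mPow (R * B * R) (1 / 2)
  have hR : R.PosDef := posDef_mPow hC _
  have hSR : S * R = 1 := by
    rw [mPow_add hC, add_neg_cancel, mPow_zero hC.isHermitian]
  have hRR : R * R = C⁻¹ := by
    rw [mPow_add hC, ← mPow_neg_one hC]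
    norm_num
  have hRS : R * S = 1 := mul_eq_one_comm.1 hSR
  have hTT : T * T = R * B * R := by
    refine mPow_half_mul_self ?_
    simpa only [hR.isHermitian.eq] using hB.conjTranspose_mul_mul_same R
  calc S * T * S * C⁻¹ * (S * T * S)
      = S * T * (S * R) * (R * S) * T * S := by simp only [← hRR, Matrix.mul_assoc]
    _ = S * (T * T) * S := by simp only [hSR, hRS, Matrix.mul_one, Matrix.mul_assoc]
    _ = (S * R) * B * (R * S) := by simp only [hTT, Matrix.mul_assoc]
    _ = B := by rw [hSR, hRS, Matrix.one_mul, Matrix.mul_one]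

end GeometricMean

/-- Theorem 4.6: for positive definite matrices `A, B`,
`A sp₋₁ B ≺_log A B⁻¹ A`. -/
theorem stmt_13 (A B : Matrix (Fin n) (Fin n) ℂ) (hA : A.PosDef) (hB : B.PosDef) :
    LogMaj (mSp A B (-1)) (A * B⁻¹ * A) := by
  set G := mGeo A⁻¹ B (1 / 2)
  have hG : G.PosDef := posDef_mGeo hA.inv hB _
  have hB_inv : B⁻¹ = G⁻¹ * A⁻¹ * G⁻¹ := by
    have hRiccati : G * A * G = B := by
      simpa only [nonsing_inv_nonsing_inv A hA.det_pos.ne'.isUnit] using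
        mGeo_mul_inv_mul_mGeo hA.inv hB.posSemidef
    rw [← hRiccati, Matrix.mul_inv_rev, Matrix.mul_inv_rev, Matrix.mul_assoc]
  rw [mSp, mPow_neg_one hG, hB_inv]
  exact logMaj_mul_mul_self hA hG.inv.isHermitian hG.inv.isUnit
end
end
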